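/- Let X be a stable set of functions on Ω. A stable Dynkin system on X is a stable σ-algebra if and only if it is closed under finite conditional intersections. -/

import Mathlib

/-!
Common framework for conditional set theory and conditional measure theory
in the sense of Drapeau–Jamneshan–Karliczek–Kupper, specialized to the
measure algebra associated to a probability space `(Ω, F, P)`.

Functions on `Ω` are identified when they agree `P`-a.s., and measurable sets
are identified when their symmetric difference is a null set.  Conditional
subsets of a stable set `X` are represented by raw pairs `(V, A)` consisting of
a set of functions and a (measurable) base set; all notions are formulated with
respect to the almost-sure identifications via the relations `cle` and `ceq`.
-/

open MeasureTheory Filter Set Topology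
open scoped ENNReal

noncomputable section

namespace CondMT

variable {Ω E F' : Type*}

/-- A countable partition of `Ω` into measurable sets (modulo `P`-null sets). -/
structure Partition {Ω : Type*} (mΩ : MeasurableSpace Ω) (P : @Measure Ω mΩ) where
  part : ℕ → Set Ω
  meas : ∀ k, MeasurableSet[mΩ] (part k)
  disj : ∀ i j, i ≠ j → P (part i ∩ part j) = 0
  cover : P ((⋃ k, part k)ᶜ) = 0

variable {mΩ : MeasurableSpace Ω}

open Classical in
/-- The concatenation `∑ x_k|A_k` of a sequence of functions along a partition:
the (a.s. unique) function equal to `x_k` on `A_k` for every `k`. -/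
def Partition.concat {P : @Measure Ω mΩ} (A : Partition mΩ P) (x : ℕ → Ω → E) : Ω → E :=
  fun ω => if h : ∃ k, ω ∈ A.part k then x (Nat.find h) ω else x 0 ω

/-- A stable set of functions on `Ω`: nonempty, closed under a.s. modification and
closed under countable concatenations along partitions. -/
def Stable (P : @Measure Ω mΩ) (X : Set (Ω → E)) : Prop :=
  X.Nonempty ∧ (∀ x ∈ X, ∀ y, x =ᵐ[P] y → y ∈ X) ∧
    ∀ (A : Partition mΩ P) (x : ℕ → Ω → E), (∀ k, x k ∈ X) → A.concat x ∈ X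

/-- Raw data of a conditional subset `V|A`: the carrier `V` and the base set `A`. -/
abbrev CondRaw (Ω E : Type*) := Set (Ω → E) × Set Ω

/-- `S` represents a conditional subset of the stable set `X`: the carrier is a
stable subset of `X` and the base is measurable. -/
def IsCond (P : @Measure Ω mΩ) (X : Set (Ω → E)) (S : CondRaw Ω E) : Prop :=
  Stable P S.1 ∧ S.1 ⊆ X ∧ MeasurableSet[mΩ] S.2

/-- Conditional inclusion `V|A ⊑ W|B`: `A ⊆ B` a.s., and every `x|A`, `x ∈ V`,
coincides a.s. on `A` with some `y|A`, `y ∈ W`. -/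
def cle (P : @Measure Ω mΩ) (S T : CondRaw Ω E) : Prop :=
  P (S.2 \ T.2) = 0 ∧ ∀ x ∈ S.1, ∃ y ∈ T.1, ∀ᵐ ω ∂P, ω ∈ S.2 → x ω = y ω

/-- Identification of conditional subsets (equality in the conditional power set). -/
def ceq (P : @Measure Ω mΩ) (S T : CondRaw Ω E) : Prop := cle P S T ∧ cle P T S

/-- `x|C ∈ V|C`: the restriction of `x` to `C` agrees a.s. on `C` with an element of `V`. -/
def memOn (P : @Measure Ω mΩ) (C : Set Ω) (x : Ω → E) (V : Set (Ω → E)) : Prop :=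
  ∃ y ∈ V, ∀ᵐ ω ∂P, ω ∈ C → x ω = y ω

/-- `∑ V_k|A_k`, the set of concatenations of sequences taken from the `V_k`. -/
def concatSet (P : @Measure Ω mΩ) (A : Partition mΩ P) (V : ℕ → Set (Ω → E)) :
    Set (Ω → E) :=
  {f | ∃ x : ℕ → Ω → E, (∀ k, x k ∈ V k) ∧ f =ᵐ[P] A.concat x}

/-- Countable concatenation `∑ (V_k|B_k)|A_k := (∑ V_k|A_k)|⋃ (A_k ∩ B_k)` in the
conditional power set. -/
def condConcat (P : @Measure Ω mΩ) (A : Partition mΩ P) (S : ℕ → CondRaw Ω E) :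
    CondRaw Ω E :=
  (concatSet P A fun k => (S k).1, ⋃ k, A.part k ∩ (S k).2)

/-- Restriction `(V|A)|B := V|(A ∩ B)`. -/
def crestrict (S : CondRaw Ω E) (B : Set Ω) : CondRaw Ω E := (S.1, S.2 ∩ B)

/-- The degenerate conditional subset `X|∅ = {∗}`, the least element of `P(X)`. -/
def cbot (X : Set (Ω → E)) : CondRaw Ω E := (X, (∅ : Set Ω))

/-- The greatest element `X = X|Ω` of `P(X)`. -/
def ctop (X : Set (Ω → E)) : CondRaw Ω E := (X, (univ : Set Ω))

/-- `a` is a supremum (conditional union) of the family `s` in `(P(X), ⊑)`. -/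
def IsSupOf (P : @Measure Ω mΩ) (X : Set (Ω → E)) (s : Set (CondRaw Ω E))
    (a : CondRaw Ω E) : Prop :=
  IsCond P X a ∧ (∀ b ∈ s, cle P b a) ∧
    ∀ c, IsCond P X c → (∀ b ∈ s, cle P b c) → cle P a c

/-- `a` is an infimum (conditional intersection) of the family `s` in `(P(X), ⊑)`. -/
def IsInfOf (P : @Measure Ω mΩ) (X : Set (Ω → E)) (s : Set (CondRaw Ω E))
    (a : CondRaw Ω E) : Prop :=
  IsCond P X a ∧ (∀ b ∈ s, cle P a b) ∧
    ∀ c, IsCond P X c → (∀ b ∈ s, cle P c b) → cle P c a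

open Classical in
/-- The conditional union (supremum) of a family of conditional subsets. -/
def cSup (P : @Measure Ω mΩ) (X : Set (Ω → E)) (s : Set (CondRaw Ω E)) : CondRaw Ω E :=
  if h : ∃ a, IsSupOf P X s a then h.choose else ctop X

open Classical in
/-- The conditional intersection (infimum) of a family of conditional subsets. -/
def cInf (P : @Measure Ω mΩ) (X : Set (Ω → E)) (s : Set (CondRaw Ω E)) : CondRaw Ω E :=
  if h : ∃ a, IsInfOf P X s a then h.choose else ctop X

/-- Binary conditional union. -/
def cSup₂ (P : @Measure Ω mΩ) (X : Set (Ω → E)) (a b : CondRaw Ω E) : CondRaw Ω E :=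
  cSup P X {a, b}

/-- Binary conditional intersection. -/
def cInf₂ (P : @Measure Ω mΩ) (X : Set (Ω → E)) (a b : CondRaw Ω E) : CondRaw Ω E :=
  cInf P X {a, b}

/-- Conditional union of an indexed family. -/
def cSupFam (P : @Measure Ω mΩ) (X : Set (Ω → E)) {ι : Sort*}
    (S : ι → CondRaw Ω E) : CondRaw Ω E :=
  cSup P X (range S)

/-- Conditional intersection of an indexed family. -/
def cInfFam (P : @Measure Ω mΩ) (X : Set (Ω → E)) {ι : Sort*}
    (S : ι → CondRaw Ω E) : CondRaw Ω E :=
  cInf P X (range S)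

/-- Disjointness of conditional subsets: `V|A ⊓ W|B = {∗}`. -/
def cdisjoint (P : @Measure Ω mΩ) (X : Set (Ω → E)) (a b : CondRaw Ω E) : Prop :=
  ceq P (cInf₂ P X a b) (cbot X)

/-- The conditional complement `(V|A)^⊏ := ⊔ {W|B : W|B ⊓ V|A = {∗}}`. -/
def ccompl (P : @Measure Ω mΩ) (X : Set (Ω → E)) (a : CondRaw Ω E) : CondRaw Ω E :=
  cSup P X {b | IsCond P X b ∧ cdisjoint P X b a}

open Classical in
/-- The largest measurable set (mod null sets) satisfying a property `Φ`,
obtained by an exhaustion argument; junk value `∅` if there is none. -/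
def largestSet (P : @Measure Ω mΩ) (Φ : Set Ω → Prop) : Set Ω :=
  if h : ∃ C, MeasurableSet[mΩ] C ∧ Φ C ∧
      ∀ C', MeasurableSet[mΩ] C' → Φ C' → P (C' \ C) = 0
  then h.choose else ∅

open Classical in
/-- The smallest measurable set (mod null sets) satisfying a property `Φ`. -/
def smallestSet (P : @Measure Ω mΩ) (Φ : Set Ω → Prop) : Set Ω :=
  if h : ∃ C, MeasurableSet[mΩ] C ∧ Φ C ∧
      ∀ C', MeasurableSet[mΩ] C' → Φ C' → P (C \ C') = 0
  then h.choose else univ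

/-- Essential infimum `inf_i A_i` of a family of measurable sets in the measure algebra. -/
def essInfFam (P : @Measure Ω mΩ) {ι : Sort*} (A : ι → Set Ω) : Set Ω :=
  largestSet P fun C => ∀ i, P (C \ A i) = 0

/-- Essential supremum `sup_i A_i` of a family of measurable sets in the measure algebra. -/
def essSupFam (P : @Measure Ω mΩ) {ι : Sort*} (A : ι → Set Ω) : Set Ω :=
  smallestSet P fun C => ∀ i, P (A i \ C) = 0

/-- A stable collection: a nonempty, `ceq`-saturated family of conditional subsets of `X`
closed under countable concatenations. -/
def IsStableColl (P : @Measure Ω mΩ) (X : Set (Ω → E)) (𝒞 : Set (CondRaw Ω E)) : Prop :=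
  𝒞.Nonempty ∧ (∀ S ∈ 𝒞, IsCond P X S) ∧
    (∀ S ∈ 𝒞, ∀ T, IsCond P X T → ceq P S T → T ∈ 𝒞) ∧
    ∀ (A : Partition mΩ P) (S : ℕ → CondRaw Ω E), (∀ k, S k ∈ 𝒞) → condConcat P A S ∈ 𝒞

/-- A stable σ-algebra on `X`. -/
def IsStableSigma (P : @Measure Ω mΩ) (X : Set (Ω → E)) (𝒳 : Set (CondRaw Ω E)) : Prop :=
  IsStableColl P X 𝒳 ∧ ctop X ∈ 𝒳 ∧ (∀ S ∈ 𝒳, ccompl P X S ∈ 𝒳) ∧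
    ∀ S : ℕ → CondRaw Ω E, (∀ k, S k ∈ 𝒳) → cSupFam P X S ∈ 𝒳

/-- A stable Dynkin system on `X`. -/
def IsStableDynkin (P : @Measure Ω mΩ) (X : Set (Ω → E)) (𝒟 : Set (CondRaw Ω E)) : Prop :=
  IsStableColl P X 𝒟 ∧ ctop X ∈ 𝒟 ∧ (∀ S ∈ 𝒟, ccompl P X S ∈ 𝒟) ∧
    ∀ S : ℕ → CondRaw Ω E, (∀ k, S k ∈ 𝒟) →
      (∀ i j, i ≠ j → cdisjoint P X (S i) (S j)) → cSupFam P X S ∈ 𝒟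

/-- A stable ring on `X`. -/
def IsStableRing (P : @Measure Ω mΩ) (X : Set (Ω → E)) (𝒳 : Set (CondRaw Ω E)) : Prop :=
  IsStableColl P X 𝒳 ∧
    ∀ S ∈ 𝒳, ∀ T ∈ 𝒳, cInf₂ P X S (ccompl P X T) ∈ 𝒳 ∧ cSup₂ P X S T ∈ 𝒳

/-- The stable σ-algebra generated by a collection `ℰ`. -/
def sigmaGen (P : @Measure Ω mΩ) (X : Set (Ω → E)) (ℰ : Set (CondRaw Ω E)) :
    Set (CondRaw Ω E) :=
  ⋂₀ {𝒳 | IsStableSigma P X 𝒳 ∧ ℰ ⊆ 𝒳}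

/-- The stable Dynkin system generated by a collection `ℰ`. -/
def dynkinGen (P : @Measure Ω mΩ) (X : Set (Ω → E)) (ℰ : Set (CondRaw Ω E)) :
    Set (CondRaw Ω E) :=
  ⋂₀ {𝒟 | IsStableDynkin P X 𝒟 ∧ ℰ ⊆ 𝒟}

/-! ### Stable set functions and stable measures -/

/-- A stable set function `μ : 𝒞 → L̄⁰₊` (represented by measurable representatives,
well defined modulo identification, and commuting with countable concatenations). -/
def IsStableSetFun (P : @Measure Ω mΩ) (𝒞 : Set (CondRaw Ω E))
    (μ : CondRaw Ω E → Ω → ℝ≥0∞) : Prop :=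
  (∀ S ∈ 𝒞, Measurable[mΩ] (μ S)) ∧
    (∀ S ∈ 𝒞, ∀ T ∈ 𝒞, ceq P S T → μ S =ᵐ[P] μ T) ∧
    ∀ (A : Partition mΩ P) (S : ℕ → CondRaw Ω E), (∀ k, S k ∈ 𝒞) →
      μ (condConcat P A S) =ᵐ[P] A.concat fun k => μ (S k)

/-- Property (M1): `μ(V|A) = μ(V|A)|A + 0|Aᶜ`. -/
def M1 (P : @Measure Ω mΩ) (𝒞 : Set (CondRaw Ω E)) (μ : CondRaw Ω E → Ω → ℝ≥0∞) : Prop :=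
  ∀ S ∈ 𝒞, μ S =ᵐ[P] S.2.indicator (μ S)

/-- Property (M2): countable additivity on pairwise disjoint sequences whose
conditional union belongs to the domain. -/
def M2 (P : @Measure Ω mΩ) (X : Set (Ω → E)) (𝒳 : Set (CondRaw Ω E))
    (μ : CondRaw Ω E → Ω → ℝ≥0∞) : Prop :=
  ∀ S : ℕ → CondRaw Ω E, (∀ k, S k ∈ 𝒳) →
    (∀ i j, i ≠ j → cdisjoint P X (S i) (S j)) → cSupFam P X S ∈ 𝒳 →
    μ (cSupFam P X S) =ᵐ[P] fun ω => ∑' k, μ (S k) ω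

/-- Finite additivity: (M2) for finite pairwise disjoint families. -/
def FinAdd (P : @Measure Ω mΩ) (X : Set (Ω → E)) (𝒳 : Set (CondRaw Ω E))
    (μ : CondRaw Ω E → Ω → ℝ≥0∞) : Prop :=
  ∀ (n : ℕ) (S : Fin n → CondRaw Ω E), (∀ k, S k ∈ 𝒳) →
    (∀ i j, i ≠ j → cdisjoint P X (S i) (S j)) → cSupFam P X S ∈ 𝒳 →
    μ (cSupFam P X S) =ᵐ[P] fun ω => ∑ k, μ (S k) ω

/-- A stable measure (or stable pre-measure, when the domain is merely a stable
ring): a stable set function satisfying (M1) and (M2). -/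
def IsStableMeasureOn (P : @Measure Ω mΩ) (X : Set (Ω → E)) (𝒳 : Set (CondRaw Ω E))
    (μ : CondRaw Ω E → Ω → ℝ≥0∞) : Prop :=
  IsStableSetFun P 𝒳 μ ∧ M1 P 𝒳 μ ∧ M2 P X 𝒳 μ

/-- A finite stable measure. -/
def IsFiniteStableMeasureOn (P : @Measure Ω mΩ) (X : Set (Ω → E))
    (𝒳 : Set (CondRaw Ω E)) (μ : CondRaw Ω E → Ω → ℝ≥0∞) : Prop :=
  IsStableMeasureOn P X 𝒳 μ ∧ ∀ᵐ ω ∂P, μ (ctop X) ω < ∞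

/-- A stable probability measure. -/
def IsStableProbOn (P : @Measure Ω mΩ) (X : Set (Ω → E)) (𝒳 : Set (CondRaw Ω E))
    (μ : CondRaw Ω E → Ω → ℝ≥0∞) : Prop :=
  IsStableMeasureOn P X 𝒳 μ ∧ μ (ctop X) =ᵐ[P] fun _ => (1 : ℝ≥0∞)

/-- A stable outer measure on the conditional power set of `X`. -/
def IsStableOuter (P : @Measure Ω mΩ) (X : Set (Ω → E))
    (μ : CondRaw Ω E → Ω → ℝ≥0∞) : Prop :=
  (∀ S, IsCond P X S → Measurable[mΩ] (μ S)) ∧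
    (∀ S T, IsCond P X S → IsCond P X T → ceq P S T → μ S =ᵐ[P] μ T) ∧
    (∀ (A : Partition mΩ P) (S : ℕ → CondRaw Ω E), (∀ k, IsCond P X (S k)) →
      μ (condConcat P A S) =ᵐ[P] A.concat fun k => μ (S k)) ∧
    (∀ S, IsCond P X S → ∀ B, MeasurableSet[mΩ] B →
      μ (crestrict S B) =ᵐ[P] B.indicator (μ S)) ∧
    (∀ S T, IsCond P X S → IsCond P X T → cle P S T → ∀ᵐ ω ∂P, μ S ω ≤ μ T ω) ∧
    ∀ S : ℕ → CondRaw Ω E, (∀ k, IsCond P X (S k)) →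
      ∀ᵐ ω ∂P, μ (cSupFam P X S) ω ≤ ∑' k, μ (S k) ω

/-- Stable Carathéodory measurability with respect to a stable outer measure. -/
def CaraMeasurable (P : @Measure Ω mΩ) (X : Set (Ω → E))
    (μ : CondRaw Ω E → Ω → ℝ≥0∞) (S : CondRaw Ω E) : Prop :=
  ∀ T, IsCond P X T →
    (fun ω => μ (cInf₂ P X T S) ω + μ (cInf₂ P X T (ccompl P X S)) ω) =ᵐ[P] μ T

/-! ### Stable functions, the stable Borel σ-algebra on `L⁰`, and the integral -/

/-- The stable set `L⁰_m(E)` of all (classes of) measurable functions `Ω → E`. -/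
def l0m (P : @Measure Ω mΩ) (E : Type*) [MeasurableSpace E] : Set (Ω → E) :=
  {x | AEMeasurable x P}

/-- A stable function between stable sets of functions. -/
def StableFun (P : @Measure Ω mΩ) (X : Set (Ω → E)) (Y : Set (Ω → F'))
    (f : (Ω → E) → Ω → F') : Prop :=
  (∀ x ∈ X, f x ∈ Y) ∧ (∀ x ∈ X, ∀ y ∈ X, x =ᵐ[P] y → f x =ᵐ[P] f y) ∧
    ∀ (A : Partition mΩ P) (x : ℕ → Ω → E), (∀ k, x k ∈ X) →
      f (A.concat x) =ᵐ[P] A.concat fun k => f (x k)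

/-- The conditional preimage `f⁻¹(W|A)`. -/
def cPreimage (P : @Measure Ω mΩ) (X : Set (Ω → E)) (f : (Ω → E) → Ω → F')
    (W : CondRaw Ω F') : CondRaw Ω E :=
  ({x ∈ X | memOn P (largestSet P fun C => P (C \ W.2) = 0 ∧ ∃ x ∈ X, memOn P C (f x) W.1)
      (f x) W.1},
    largestSet P fun C => P (C \ W.2) = 0 ∧ ∃ x ∈ X, memOn P C (f x) W.1)

/-- The stable Borel σ-algebra `B(L⁰)` on `L⁰`, generated by the stable open balls. -/
def borelL0 (P : @Measure Ω mΩ) : Set (CondRaw Ω ℝ) :=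
  sigmaGen P (l0m P ℝ)
    {S | ∃ r ε : Ω → ℝ, AEMeasurable r P ∧ AEMeasurable ε P ∧ (∀ᵐ ω ∂P, 0 < ε ω) ∧
      ceq P S ({s | AEMeasurable s P ∧ ∀ᵐ ω ∂P, |s ω - r ω| < ε ω}, univ)}

/-- A stably measurable function `f : X → L⁰` with respect to a stable σ-algebra `𝒳`. -/
def StablyMeasurable (P : @Measure Ω mΩ) (X : Set (Ω → E)) (𝒳 : Set (CondRaw Ω E))
    (f : (Ω → E) → Ω → ℝ) : Prop :=
  StableFun P X (l0m P ℝ) f ∧ ∀ W ∈ borelL0 P, cPreimage P X f W ∈ 𝒳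

/-- The base set `A_x` of the stable indicator function of `S = V|A` at `x`. -/
def indBase (P : @Measure Ω mΩ) (S : CondRaw Ω E) (x : Ω → E) : Set Ω :=
  largestSet P fun C => P (C \ S.2) = 0 ∧ memOn P C x S.1

/-- The stable indicator function `1_{V|A} : X → L⁰`. -/
def cIndicator (P : @Measure Ω mΩ) (S : CondRaw Ω E) (x : Ω → E) : Ω → ℝ :=
  (indBase P S x).indicator fun _ => (1 : ℝ)

/-- Data of a stable elementary function: coefficients and conditional sets. -/
def ElemRep (Ω E : Type*) := Σ n : ℕ, (Fin n → Ω → ℝ) × (Fin n → CondRaw Ω E)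

/-- The function `∑_{k ≤ n} r_k 1_{V_k|A_k}` represented by `ρ`. -/
def repFun (P : @Measure Ω mΩ) (ρ : ElemRep Ω E) : (Ω → E) → Ω → ℝ :=
  fun x ω => ∑ k, ρ.2.1 k ω * cIndicator P (ρ.2.2 k) x ω

/-- The representation `ρ` is admissible: nonnegative `L⁰`-coefficients and a finite
pairwise disjoint family in `𝒳` whose conditional union is `X`. -/
def GoodRep (P : @Measure Ω mΩ) (X : Set (Ω → E)) (𝒳 : Set (CondRaw Ω E))
    (ρ : ElemRep Ω E) : Prop :=
  (∀ k, AEMeasurable (ρ.2.1 k) P) ∧ (∀ k, ∀ᵐ ω ∂P, 0 ≤ ρ.2.1 k ω) ∧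
    (∀ k, ρ.2.2 k ∈ 𝒳) ∧ (∀ i j, i ≠ j → cdisjoint P X (ρ.2.2 i) (ρ.2.2 j)) ∧
    ceq P (cSupFam P X ρ.2.2) (ctop X)

/-- A stable elementary function. -/
def IsElementary (P : @Measure Ω mΩ) (X : Set (Ω → E)) (𝒳 : Set (CondRaw Ω E))
    (f : (Ω → E) → Ω → ℝ) : Prop :=
  ∃ ρ : ElemRep Ω E, GoodRep P X 𝒳 ρ ∧ ∀ x ∈ X, f x =ᵐ[P] repFun P ρ x

/-- The stable Lebesgue integral `∑_k r_k μ(V_k|A_k)` of the elementary representation. -/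
def repInt (μ : CondRaw Ω E → Ω → ℝ≥0∞) (ρ : ElemRep Ω E) : Ω → ℝ≥0∞ :=
  fun ω => ∑ k, ENNReal.ofReal (ρ.2.1 k ω) * μ (ρ.2.2 k) ω

/-- The stable Lebesgue integral of a nonnegative function, as the supremum of the
integrals of the dominated stable elementary functions. -/
def cIntNN (P : @Measure Ω mΩ) (X : Set (Ω → E)) (𝒳 : Set (CondRaw Ω E))
    (μ : CondRaw Ω E → Ω → ℝ≥0∞) (f : (Ω → E) → Ω → ℝ) : Ω → ℝ≥0∞ :=
  fun ω =>
    ⨆ ρ : {ρ : ElemRep Ω E // GoodRep P X 𝒳 ρ ∧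
        ∀ x ∈ X, ∀ᵐ ω' ∂P, repFun P ρ x ω' ≤ f x ω'},
      repInt μ ρ.1 ω

/-- The positive part `f⁺` of an `L⁰`-valued function. -/
def fplus (f : (Ω → E) → Ω → ℝ) : (Ω → E) → Ω → ℝ := fun x ω => max (f x ω) 0

/-- The negative part `f⁻` of an `L⁰`-valued function. -/
def fminus (f : (Ω → E) → Ω → ℝ) : (Ω → E) → Ω → ℝ := fun x ω => max (-(f x ω)) 0

/-- Stable integrability of `f : X → L⁰`. -/
def CIntegrable (P : @Measure Ω mΩ) (X : Set (Ω → E)) (𝒳 : Set (CondRaw Ω E))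
    (μ : CondRaw Ω E → Ω → ℝ≥0∞) (f : (Ω → E) → Ω → ℝ) : Prop :=
  StablyMeasurable P X 𝒳 f ∧ (∀ᵐ ω ∂P, cIntNN P X 𝒳 μ (fplus f) ω < ∞) ∧
    ∀ᵐ ω ∂P, cIntNN P X 𝒳 μ (fminus f) ω < ∞

/-- The stable Lebesgue integral `∫_X f dμ := ∫ f⁺ dμ − ∫ f⁻ dμ`. -/
def cInt (P : @Measure Ω mΩ) (X : Set (Ω → E)) (𝒳 : Set (CondRaw Ω E))
    (μ : CondRaw Ω E → Ω → ℝ≥0∞) (f : (Ω → E) → Ω → ℝ) : Ω → ℝ :=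
  fun ω => (cIntNN P X 𝒳 μ (fplus f) ω).toReal - (cIntNN P X 𝒳 μ (fminus f) ω).toReal

/-! ### Products and sections -/

/-- The pairing `ω ↦ (x ω, y ω)`. -/
def pairFn (x : Ω → E) (y : Ω → F') : Ω → E × F' := fun ω => (x ω, y ω)

/-- The Cartesian product `X × Y` of two stable sets, as a stable set of functions
`Ω → E × F'`. -/
def prodSet (P : @Measure Ω mΩ) (X : Set (Ω → E)) (Y : Set (Ω → F')) :
    Set (Ω → E × F') :=
  {z | ∃ x ∈ X, ∃ y ∈ Y, z =ᵐ[P] pairFn x y}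

/-- The conditional rectangle `V|A × W|B := (V × W)|A ∩ B`. -/
def crect (P : @Measure Ω mΩ) (S : CondRaw Ω E) (T : CondRaw Ω F') :
    CondRaw Ω (E × F') :=
  (prodSet P S.1 T.1, S.2 ∩ T.2)

/-- The stable product σ-algebra `𝒳 ⊗ 𝒴`, generated by the conditional rectangles. -/
def prodSigma (P : @Measure Ω mΩ) (X : Set (Ω → E)) (Y : Set (Ω → F'))
    (𝒳 : Set (CondRaw Ω E)) (𝒴 : Set (CondRaw Ω F')) : Set (CondRaw Ω (E × F')) :=
  sigmaGen P (prodSet P X Y) {R | ∃ S ∈ 𝒳, ∃ T ∈ 𝒴, ceq P R (crect P S T)}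

/-- The conditional `x`-section `(Z|C)_x` of a conditional subset of `X × Y`. -/
def xsection (P : @Measure Ω mΩ) (Y : Set (Ω → F')) (Z : CondRaw Ω (E × F'))
    (x : Ω → E) : CondRaw Ω F' :=
  ({y ∈ Y | memOn P (largestSet P fun D => P (D \ Z.2) = 0 ∧ ∃ y ∈ Y, memOn P D (pairFn x y) Z.1)
      (pairFn x y) Z.1},
    largestSet P fun D => P (D \ Z.2) = 0 ∧ ∃ y ∈ Y, memOn P D (pairFn x y) Z.1)

/-- The conditional `y`-section `(Z|C)_y` of a conditional subset of `X × Y`. -/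
def ysection (P : @Measure Ω mΩ) (X : Set (Ω → E)) (Z : CondRaw Ω (E × F'))
    (y : Ω → F') : CondRaw Ω E :=
  ({x ∈ X | memOn P (largestSet P fun D => P (D \ Z.2) = 0 ∧ ∃ x ∈ X, memOn P D (pairFn x y) Z.1)
      (pairFn x y) Z.1},
    largestSet P fun D => P (D \ Z.2) = 0 ∧ ∃ x ∈ X, memOn P D (pairFn x y) Z.1)

/-! ### Conditional subsets of `L⁰_m(E)` associated to measurable sets -/

/-- `L⁰_m(F) = {x ∈ L⁰_m(E) : x ∈ F a.s.}` for a measurable `F ⊆ E`. -/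
def l0mF (P : @Measure Ω mΩ) {E : Type*} [MeasurableSpace E] (F : Set E) : Set (Ω → E) :=
  {x | AEMeasurable x P ∧ ∀ᵐ ω ∂P, x ω ∈ F}

/-- `∑ L⁰_m(F_k)|A_k = {x ∈ L⁰_m(E) : x ∈ F_k a.s. on A_k for all k}`. -/
def l0mConcat (P : @Measure Ω mΩ) {E : Type*} [MeasurableSpace E]
    (A : Partition mΩ P) (F : ℕ → Set E) : Set (Ω → E) :=
  {x | AEMeasurable x P ∧ ∀ k, ∀ᵐ ω ∂P, ω ∈ A.part k → x ω ∈ F k}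

/-- The stable ring `ℛ` on `L⁰_m(E)` generated by a measurable structure on `E`:
all conditional subsets of the form `(∑ L⁰_m(F_k)|A_k)|B`. -/
def ringR (P : @Measure Ω mΩ) (E : Type*) [MeasurableSpace E] : Set (CondRaw Ω E) :=
  {S | ∃ (F : ℕ → Set E) (A : Partition mΩ P) (B : Set Ω),
    (∀ k, MeasurableSet (F k)) ∧ MeasurableSet[mΩ] B ∧
      ceq P S (l0mConcat P A F, B)}

end CondMT

namespace CondMT

/-!
A conditional subset `S` of `X` is determined by its membership events: `indBase P S x` is the
largest event on which `x` belongs to `S`. The map `x ↦ indBase P S x` is *local* (its value on an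
event depends only on `x` restricted to that event), conditional inclusion is almost sure
inclusion of membership events, and conversely every local family of events comes from a
conditional subset. Hence countable conditional unions, countable conditional intersections and
complements are computed on membership events, up to null sets, by the corresponding operations
on sets, and the statement reduces to the classical one: `S ⊓ T = (S^⊏ ⊔ T^⊏)^⊏` in one
direction, and the disjointification of a sequence in the other.
-/

section Gluing

variable {Ω E : Type*} {mΩ : MeasurableSpace Ω} {P : @Measure Ω mΩ} {X : Set (Ω → E)}

/-- The least `n` with `ω ∈ C n`, used to select among countably many functions at `ω`.
It is `0` if there is no such `n`. -/
def firstIndex (C : ℕ → Set Ω) (ω : Ω) : ℕ := sInf {n | ω ∈ C n}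

lemma mem_firstIndex {C : ℕ → Set Ω} {ω : Ω} (h : ∃ n, ω ∈ C n) : ω ∈ C (firstIndex C ω) :=
  Nat.sInf_mem h

lemma measurable_firstIndex {C : ℕ → Set Ω} (hC : ∀ n, MeasurableSet (C n)) :
    Measurable (firstIndex C) := by
  classical
  have hmeas : ∀ n, MeasurableSet {ω | ω ∈ C n ∨ ω ∉ ⋃ k, C k} := fun n =>
    (hC n).union (MeasurableSet.iUnion hC).compl
  have hex : ∀ ω, ∃ n, ω ∈ C n ∨ ω ∉ ⋃ k, C k := fun ω => by
    by_cases h : ω ∈ ⋃ k, C k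
    · exact (mem_iUnion.1 h).imp fun _ => Or.inl
    · exact ⟨0, Or.inr h⟩
  convert measurable_find hex hmeas using 2 with ω
  by_cases h : ∃ n, ω ∈ C n
  · simp [firstIndex, Nat.sInf_def (s := {n | ω ∈ C n}) h, mem_iUnion.2 h]
  · simp [firstIndex, not_exists.1 h, eq_comm (a := 0)]

/-- The partition of `Ω` into the level sets of a measurable index. -/
def Partition.ofIndex (P : @Measure Ω mΩ) {N : Ω → ℕ} (hN : Measurable N) : Partition mΩ P where
  part k := N ⁻¹' {k}
  meas k := hN (measurableSet_singleton k)
  disj i j hij := by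
    rw [← preimage_inter, singleton_inter_eq_empty.2 (by simpa using hij), preimage_empty,
      measure_empty]
  cover := by simp [← preimage_iUnion, iUnion_of_singleton]

lemma Partition.concat_eq_firstIndex (A : Partition mΩ P) (x : ℕ → Ω → E) :
    A.concat x = fun ω => x (firstIndex A.part ω) ω := by
  classical
  ext ω
  by_cases h : ∃ k, ω ∈ A.part k
  · simp only [concat, dif_pos h, firstIndex, Nat.sInf_def (s := {k | ω ∈ A.part k}) h]
  · simp [concat, firstIndex, not_exists.1 h]

lemma Partition.concat_ofIndex {N : Ω → ℕ} (hN : Measurable N) (x : ℕ → Ω → E) :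
    (ofIndex P hN).concat x = fun ω => x (N ω) ω := by
  simp [concat_eq_firstIndex, firstIndex, ofIndex]

lemma stable_iff_glue :
    Stable P X ↔ X.Nonempty ∧ (∀ x ∈ X, ∀ y, x =ᵐ[P] y → y ∈ X) ∧
      ∀ N : Ω → ℕ, Measurable N → ∀ x : ℕ → Ω → E, (∀ k, x k ∈ X) →
        (fun ω => x (N ω) ω) ∈ X := by
  refine and_congr_right fun _ => and_congr_right fun _ => ⟨fun h N hN x hx => ?_,
    fun h A x hx => ?_⟩
  · exact Partition.concat_ofIndex (P := P) hN x ▸ h _ x hx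
  · exact A.concat_eq_firstIndex x ▸ h _ (measurable_firstIndex A.meas) x hx

lemma Stable.glue_mem (hX : Stable P X) {N : Ω → ℕ} (hN : Measurable N) {x : ℕ → Ω → E}
    (hx : ∀ k, x k ∈ X) : (fun ω => x (N ω) ω) ∈ X :=
  (stable_iff_glue.1 hX).2.2 N hN x hx

lemma Stable.piecewise_mem (hX : Stable P X) {C : Set Ω} [DecidablePred (· ∈ C)]
    (hC : MeasurableSet C) {x y : Ω → E} (hx : x ∈ X) (hy : y ∈ X) : C.piecewise x y ∈ X := by
  have hN : Measurable fun ω => if ω ∈ C then 0 else 1 :=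
    Measurable.ite hC measurable_const measurable_const
  convert hX.glue_mem hN (x := fun k => if k = 0 then x else y)
    (fun k => by split_ifs <;> assumption) using 1
  ext ω
  by_cases h : ω ∈ C <;> simp [h]

end Gluing

section Local

variable {Ω E : Type*} {mΩ : MeasurableSpace Ω} {P : @Measure Ω mΩ} {V : Set (Ω → E)}
  {φ : (Ω → E) → Set Ω}

/-- A family of events indexed by the functions in `V` is local if functions agreeing on a
measurable set have events agreeing on it. These are the families of membership events of
conditional subsets, see `exists_isCond_indBase_ae_eq`. -/
def IsLocal (P : @Measure Ω mΩ) (V : Set (Ω → E)) (φ : (Ω → E) → Set Ω) : Prop :=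
  ∀ x ∈ V, ∀ y ∈ V, ∀ C, MeasurableSet C → (∀ᵐ ω ∂P, ω ∈ C → x ω = y ω) →
    ∀ᵐ ω ∂P, ω ∈ C → (ω ∈ φ x ↔ ω ∈ φ y)

lemma IsLocal.compl (hφ : IsLocal P V φ) : IsLocal P V fun x => (φ x)ᶜ := by
  intro x hx y hy C hC hxy
  filter_upwards [hφ x hx y hy C hC hxy] with ω h hω using not_congr (h hω)

lemma IsLocal.biUnion {ι : Type*} {s : Set ι} (hs : s.Countable) {φ : ι → (Ω → E) → Set Ω}
    (hφ : ∀ i ∈ s, IsLocal P V (φ i)) : IsLocal P V fun x => ⋃ i ∈ s, φ i x := by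
  intro x hx y hy C hC hxy
  filter_upwards [(ae_ball_iff hs).2 fun i hi => hφ i hi x hx y hy C hC hxy] with ω h hω
  simp only [mem_iUnion, exists_prop]
  exact exists_congr fun i => and_congr_right fun hi => h i hi hω

lemma IsLocal.biInter {ι : Type*} {s : Set ι} (hs : s.Countable) {φ : ι → (Ω → E) → Set Ω}
    (hφ : ∀ i ∈ s, IsLocal P V (φ i)) : IsLocal P V fun x => ⋂ i ∈ s, φ i x := by
  simpa only [compl_iUnion, compl_compl] using
    (IsLocal.biUnion hs fun i hi => (hφ i hi).compl).compl

lemma IsLocal.glue (hφ : IsLocal P V φ) (hV : Stable P V) {N : Ω → ℕ} (hN : Measurable N)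
    {x : ℕ → Ω → E} (hx : ∀ k, x k ∈ V) :
    ∀ᵐ ω ∂P, ω ∈ φ (fun ω => x (N ω) ω) ↔ ω ∈ φ (x (N ω)) := by
  have hlevel : ∀ k, ∀ᵐ ω ∂P, N ω = k → (ω ∈ φ (fun ω => x (N ω) ω) ↔ ω ∈ φ (x k)) := fun k =>
    hφ _ (hV.glue_mem hN hx) _ (hx k) (N ⁻¹' {k}) (hN (measurableSet_singleton k))
      (.of_forall fun _ hω => congrArg (x · _) hω)
  filter_upwards [ae_all_iff.2 hlevel] with ω h using h _ rfl

lemma IsLocal.piecewise_ae_eq (hφ : IsLocal P V φ) (hV : Stable P V) {C : Set Ω}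
    [DecidablePred (· ∈ C)] (hC : MeasurableSet C) {x y : Ω → E} (hx : x ∈ V) (hy : y ∈ V) :
    φ (C.piecewise x y) =ᵐ[P] C.ite (φ x) (φ y) := by
  have hz := hV.piecewise_mem hC hx hy
  have hin := hφ _ hz x hx C hC (.of_forall fun _ hω => C.piecewise_eq_of_mem x y hω)
  have hout := hφ _ hz y hy Cᶜ hC.compl
    (.of_forall fun _ hω => C.piecewise_eq_of_notMem x y hω)
  rw [eventuallyEq_set]
  filter_upwards [hin, hout] with ω h h'
  by_cases hω : ω ∈ C
  · simp [Set.ite, hω, h hω]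
  · simp [Set.ite, hω, h' hω]

lemma IsLocal.stable_setOf_le (hφ : IsLocal P V φ) (hV : Stable P V) {A : Set Ω}
    (hA : ∃ x ∈ V, A ≤ᵐ[P] φ x) : Stable P {x ∈ V | A ≤ᵐ[P] φ x} := by
  refine stable_iff_glue.2 ⟨hA, ?_, ?_⟩
  · rintro x ⟨hx, hAx⟩ y hxy
    have hy := hV.2.1 x hx y hxy
    refine ⟨hy, ?_⟩
    filter_upwards [hAx, hφ x hx y hy univ .univ (hxy.mono fun _ h _ => h)] with ω hAx h hω
    exact (h trivial).1 (hAx hω)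
  · intro N hN x hx
    refine ⟨hV.glue_mem hN fun k => (hx k).1, ?_⟩
    filter_upwards [hφ.glue hV hN fun k => (hx k).1, ae_all_iff.2 fun k => (hx k).2]
      with ω hglue hAx hω using hglue.2 (hAx _ hω)

lemma exists_largest_measurableSet [SFinite P] {Φ : Set Ω → Prop} (hempty : Φ ∅)
    (hunion : ∀ C : ℕ → Set Ω, (∀ n, MeasurableSet (C n)) → (∀ n, Φ (C n)) → Φ (⋃ n, C n)) :
    ∃ C, MeasurableSet C ∧ Φ C ∧ ∀ D, MeasurableSet D → Φ D → D ≤ᵐ[P] C := by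
  rw [← ae_toFinite (μ := P)]
  set Q := P.toFinite
  obtain ⟨u, -, hu, hmem⟩ := exists_seq_tendsto_sSup
    (S := Q '' {C | MeasurableSet C ∧ Φ C}) ⟨_, ∅, ⟨.empty, hempty⟩, rfl⟩ (OrderTop.bddAbove _)
  choose C hC hCu using hmem
  have hmeas : MeasurableSet (⋃ n, C n) := .iUnion fun n => (hC n).1
  refine ⟨⋃ n, C n, hmeas, hunion C (fun n => (hC n).1) fun n => (hC n).2,
    fun D hD hΦD => ?_⟩
  have hΦunion : Φ (D ∪ ⋃ n, C n) := by
    have h := hunion (fun n => n.casesOn D C) (fun n => n.casesOn hD fun n => (hC n).1)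
      (fun n => n.casesOn hΦD fun n => (hC n).2)
    rwa [← union_iUnion_nat_succ] at h
  have hle : Q (D ∪ ⋃ n, C n) ≤ Q (⋃ n, C n) :=
    calc Q (D ∪ ⋃ n, C n) ≤ sSup (Q '' {C | MeasurableSet C ∧ Φ C}) :=
          le_sSup ⟨_, ⟨hD.union hmeas, hΦunion⟩, rfl⟩
      _ ≤ Q (⋃ n, C n) := le_of_tendsto' hu fun n =>
          (hCu n).symm.trans_le (measure_mono (subset_iUnion C n))
  have heq : (⋃ n, C n : Set Ω) =ᵐ[Q] (D ∪ ⋃ n, C n : Set Ω) :=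
    ae_eq_of_subset_of_measure_ge subset_union_right hle hmeas.nullMeasurableSet
      (measure_ne_top _ _)
  exact (LE.le.eventuallyLE subset_union_left).trans heq.symm.le

lemma IsLocal.exists_largest [SFinite P] (hφ : IsLocal P V φ) (hV : Stable P V) :
    ∃ C, MeasurableSet C ∧ (∃ x ∈ V, C ≤ᵐ[P] φ x) ∧
      ∀ D, MeasurableSet D → ∀ x ∈ V, D ≤ᵐ[P] φ x → D ≤ᵐ[P] C := by
  obtain ⟨p, hp⟩ := hV.1
  obtain ⟨C, hC, hxC, hmax⟩ := exists_largest_measurableSet (P := P)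
    (Φ := fun C => ∃ x ∈ V, C ≤ᵐ[P] φ x) ⟨p, hp, .of_forall fun _ => False.elim⟩
    fun C hC h => by
      choose x hx hCx using h
      refine ⟨_, hV.glue_mem (measurable_firstIndex hC) hx, ?_⟩
      filter_upwards [hφ.glue hV (measurable_firstIndex hC) hx, ae_all_iff.2 hCx]
        with ω hglue hsub hω
      exact hglue.2 (hsub _ (mem_firstIndex (mem_iUnion.1 hω)))
  exact ⟨C, hC, hxC, fun D hD x hx hDx => hmax D hD ⟨x, hx, hDx⟩⟩

end Local

section MembershipEvents

variable {Ω E : Type*} {mΩ : MeasurableSpace Ω} {P : @Measure Ω mΩ}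
  {X : Set (Ω → E)} {S T : CondRaw Ω E} {φ : (Ω → E) → Set Ω}

/-- The part of the base of `S` on which `x` and `y` agree; for `y` in the carrier of `S`, it is
where `y` witnesses that `x` belongs to `S`. -/
def agreeSet (S : CondRaw Ω E) (x y : Ω → E) : Set Ω := {ω ∈ S.2 | x ω = y ω}

lemma largestSet_spec {Φ : Set Ω → Prop}
    (h : ∃ C, MeasurableSet C ∧ Φ C ∧ ∀ D, MeasurableSet D → Φ D → P (D \ C) = 0) :
    MeasurableSet (largestSet P Φ) ∧ Φ (largestSet P Φ) ∧
      ∀ D, MeasurableSet D → Φ D → P (D \ largestSet P Φ) = 0 := by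
  rw [largestSet, dif_pos h]
  exact h.choose_spec

lemma le_base_and_memOn_iff {C : Set Ω} {x : Ω → E} :
    P (C \ S.2) = 0 ∧ memOn P C x S.1 ↔ ∃ y ∈ S.1, C ≤ᵐ[P] agreeSet S x y := by
  rw [← ae_le_set]
  constructor
  · rintro ⟨hbase, y, hy, hxy⟩
    refine ⟨y, hy, ?_⟩
    filter_upwards [hbase, hxy] with ω hb he hω using ⟨hb hω, he hω⟩
  · rintro ⟨y, hy, h⟩
    exact ⟨h.mono fun _ h hω => (h hω).1, y, hy, h.mono fun _ h hω => (h hω).2⟩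

variable [SFinite P]

lemma indBase_spec (hS : Stable P S.1) (x : Ω → E) :
    MeasurableSet (indBase P S x) ∧ (∃ y ∈ S.1, indBase P S x ≤ᵐ[P] agreeSet S x y) ∧
      ∀ C, MeasurableSet C → ∀ y ∈ S.1, C ≤ᵐ[P] agreeSet S x y → C ≤ᵐ[P] indBase P S x := by
  have hlocal : IsLocal P S.1 (agreeSet S x) := fun y _ z _ C _ hyz => by
    filter_upwards [hyz] with ω h hω
    simp only [agreeSet, mem_ofPred_eq, h hω]
  obtain ⟨C, hC, hCy, hmax⟩ := hlocal.exists_largest hS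
  obtain ⟨hmeas, hle, hlargest⟩ := largestSet_spec (P := P)
    (Φ := fun C => P (C \ S.2) = 0 ∧ memOn P C x S.1) ⟨C, hC, le_base_and_memOn_iff.2 hCy,
      fun D hD hDx => (le_base_and_memOn_iff.1 hDx).elim fun y hy =>
        ae_le_set.1 (hmax D hD y hy.1 hy.2)⟩
  exact ⟨hmeas, le_base_and_memOn_iff.1 hle, fun D hD y hy hDy =>
    ae_le_set.2 (hlargest D hD (le_base_and_memOn_iff.2 ⟨y, hy, hDy⟩))⟩

lemma measurableSet_indBase (hS : Stable P S.1) (x : Ω → E) : MeasurableSet (indBase P S x) :=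
  (indBase_spec hS x).1

lemma exists_indBase_le_agreeSet (hS : Stable P S.1) (x : Ω → E) :
    ∃ y ∈ S.1, indBase P S x ≤ᵐ[P] agreeSet S x y :=
  (indBase_spec hS x).2.1

lemma le_indBase (hS : Stable P S.1) {C : Set Ω} (hC : MeasurableSet C) {x y : Ω → E}
    (hy : y ∈ S.1) (h : C ≤ᵐ[P] agreeSet S x y) : C ≤ᵐ[P] indBase P S x :=
  (indBase_spec hS x).2.2 C hC y hy h

lemma isLocal_indBase (hS : Stable P S.1) (V : Set (Ω → E)) : IsLocal P V (indBase P S) := by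
  have hmono : ∀ x y : Ω → E, ∀ C, MeasurableSet C → (∀ᵐ ω ∂P, ω ∈ C → x ω = y ω) →
      (indBase P S x ∩ C : Set Ω) ≤ᵐ[P] indBase P S y := by
    intro x y C hC hxy
    obtain ⟨w, hw, hxw⟩ := exists_indBase_le_agreeSet hS x
    refine le_indBase hS ((measurableSet_indBase hS x).inter hC) hw ?_
    filter_upwards [hxw, hxy] with ω hw he hω
    exact ⟨(hw hω.1).1, (he hω.2).symm.trans (hw hω.1).2⟩
  intro x _ y _ C hC hxy
  filter_upwards [hmono x y C hC hxy, hmono y x C hC (hxy.mono fun _ h hω => (h hω).symm)]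
    with ω h h' hω using ⟨fun hx => h ⟨hx, hω⟩, fun hy => h' ⟨hy, hω⟩⟩

lemma cle_iff_indBase_le (hS : IsCond P X S) (hT : Stable P T.1) :
    cle P S T ↔ ∀ x ∈ X, indBase P S x ≤ᵐ[P] indBase P T x := by
  constructor
  · rintro ⟨hbase, hcarrier⟩ x -
    obtain ⟨w, hw, hxw⟩ := exists_indBase_le_agreeSet hS.1 x
    obtain ⟨v, hv, hwv⟩ := hcarrier w hw
    refine le_indBase hT (measurableSet_indBase hS.1 x) hv ?_
    filter_upwards [hxw, hwv, ae_le_set.2 hbase] with ω hxw hwv hbase hω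
    obtain ⟨hωS, hxw⟩ := hxw hω
    exact ⟨hbase hωS, hxw.trans (hwv hωS)⟩
  · intro h
    have hwitness : ∀ x ∈ S.1, ∃ y ∈ T.1, S.2 ≤ᵐ[P] agreeSet T x y := by
      intro x hx
      obtain ⟨y, hy, hxy⟩ := exists_indBase_le_agreeSet hT x
      have hbase : S.2 ≤ᵐ[P] indBase P S x :=
        le_indBase hS.1 hS.2.2 hx (.of_forall fun _ hω => ⟨hω, rfl⟩)
      exact ⟨y, hy, (hbase.trans (h x (hS.2.1 hx))).trans hxy⟩
    obtain ⟨x, hx⟩ := hS.1.1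
    obtain ⟨y, hy, hxy⟩ := hwitness x hx
    exact ⟨(le_base_and_memOn_iff.2 ⟨y, hy, hxy⟩).1, fun x hx =>
      (le_base_and_memOn_iff.2 (hwitness x hx)).2⟩

lemma ceq_iff_indBase_ae_eq (hS : IsCond P X S) (hT : IsCond P X T) :
    ceq P S T ↔ ∀ x ∈ X, indBase P S x =ᵐ[P] indBase P T x := by
  rw [ceq, cle_iff_indBase_le hS hT.1, cle_iff_indBase_le hT hS.1]
  exact ⟨fun h x hx => (h.1 x hx).antisymm (h.2 x hx),
    fun h => ⟨fun x hx => (h x hx).le, fun x hx => (h x hx).symm.le⟩⟩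

lemma exists_isCond_indBase_ae_eq (hX : Stable P X) (hφ : IsLocal P X φ)
    (hmeas : ∀ x ∈ X, MeasurableSet (φ x)) :
    ∃ S, IsCond P X S ∧ ∀ x ∈ X, indBase P S x =ᵐ[P] φ x := by
  classical
  obtain ⟨A, hA, hAφ, hmax⟩ := hφ.exists_largest hX
  obtain ⟨x₀, hx₀, hAx₀⟩ := id hAφ
  have hV := hφ.stable_setOf_le hX hAφ
  set S : CondRaw Ω E := ({x ∈ X | A ≤ᵐ[P] φ x}, A)
  refine ⟨S, ⟨hV, fun x hx => hx.1, hA⟩, fun x hx => EventuallyLE.antisymm ?_ ?_⟩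
  · obtain ⟨w, ⟨hw, hAw⟩, hxw⟩ := exists_indBase_le_agreeSet (S := S) hV x
    filter_upwards [hxw, hAw, hφ x hx w hw _ (measurableSet_indBase (S := S) hV x)
      (hxw.mono fun _ h hω => (h hω).2)] with ω hxw hAw hlocal hω
    exact (hlocal hω).2 (hAw (hxw hω).1)
  · have hz : (φ x).piecewise x x₀ ∈ S.1 := by
      refine ⟨hX.piecewise_mem (hmeas x hx) hx hx₀, ?_⟩
      filter_upwards [(hφ.piecewise_ae_eq hX (hmeas x hx) hx hx₀).mem_iff, hAx₀]
        with ω hglue hAx₀ hω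
      by_cases hωx : ω ∈ φ x
      · exact hglue.2 (Or.inl ⟨hωx, hωx⟩)
      · exact hglue.2 (Or.inr ⟨hAx₀ hω, hωx⟩)
    refine le_indBase (S := S) hV (hmeas x hx) hz ?_
    filter_upwards [hmax (φ x) (hmeas x hx) x hx .rfl] with ω hωA hω
    exact ⟨hωA hω, ((φ x).piecewise_eq_of_mem x x₀ hω).symm⟩

end MembershipEvents

section Operations

variable {Ω E : Type*} {mΩ : MeasurableSpace Ω} {P : @Measure Ω mΩ}
  {X : Set (Ω → E)} {S T : CondRaw Ω E} {s : Set (CondRaw Ω E)} {φ : (Ω → E) → Set Ω}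

lemma isSupOf_cSup (h : IsSupOf P X s S) : IsSupOf P X s (cSup P X s) := by
  have hex : ∃ a, IsSupOf P X s a := ⟨S, h⟩
  rw [cSup, dif_pos hex]
  exact hex.choose_spec

lemma isInfOf_cInf (h : IsInfOf P X s S) : IsInfOf P X s (cInf P X s) := by
  have hex : ∃ a, IsInfOf P X s a := ⟨S, h⟩
  rw [cInf, dif_pos hex]
  exact hex.choose_spec

lemma IsSupOf.ceq (hS : IsSupOf P X s S) (hT : IsSupOf P X s T) : ceq P S T :=
  ⟨hS.2.2 T hT.1 hT.2.1, hT.2.2 S hS.1 hS.2.1⟩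

lemma IsInfOf.ceq (hS : IsInfOf P X s S) (hT : IsInfOf P X s T) : ceq P S T :=
  ⟨hT.2.2 S hS.1 hS.2.1, hS.2.2 T hT.1 hT.2.1⟩

variable [SFinite P]

lemma cSup_spec_of_upperBounds (hX : Stable P X) (hφ : IsLocal P X φ)
    (hmeas : ∀ x ∈ X, MeasurableSet (φ x))
    (h : ∀ T, IsCond P X T → ((∀ S ∈ s, cle P S T) ↔ ∀ x ∈ X, φ x ≤ᵐ[P] indBase P T x)) :
    IsCond P X (cSup P X s) ∧ ∀ x ∈ X, indBase P (cSup P X s) x =ᵐ[P] φ x := by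
  obtain ⟨R, hR, hRφ⟩ := exists_isCond_indBase_ae_eq hX hφ hmeas
  have hsup : IsSupOf P X s R := ⟨hR, (h R hR).2 fun x hx => (hRφ x hx).symm.le, fun T hT hsT =>
    (cle_iff_indBase_le hR hT.1).2 fun x hx => (hRφ x hx).le.trans ((h T hT).1 hsT x hx)⟩
  have hcSup := isSupOf_cSup hsup
  exact ⟨hcSup.1, fun x hx =>
    ((ceq_iff_indBase_ae_eq hcSup.1 hR).1 (hcSup.ceq hsup) x hx).trans (hRφ x hx)⟩

lemma cInf_spec_of_lowerBounds (hX : Stable P X) (hφ : IsLocal P X φ)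
    (hmeas : ∀ x ∈ X, MeasurableSet (φ x))
    (h : ∀ T, IsCond P X T → ((∀ S ∈ s, cle P T S) ↔ ∀ x ∈ X, indBase P T x ≤ᵐ[P] φ x)) :
    IsCond P X (cInf P X s) ∧ ∀ x ∈ X, indBase P (cInf P X s) x =ᵐ[P] φ x := by
  obtain ⟨R, hR, hRφ⟩ := exists_isCond_indBase_ae_eq hX hφ hmeas
  have hinf : IsInfOf P X s R := ⟨hR, (h R hR).2 fun x hx => (hRφ x hx).le, fun T hT hsT =>
    (cle_iff_indBase_le hT hR.1).2 fun x hx => ((h T hT).1 hsT x hx).trans (hRφ x hx).symm.le⟩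
  have hcInf := isInfOf_cInf hinf
  exact ⟨hcInf.1, fun x hx =>
    ((ceq_iff_indBase_ae_eq hcInf.1 hR).1 (hcInf.ceq hinf) x hx).trans (hRφ x hx)⟩

lemma cSup_spec (hX : Stable P X) (hs : s.Countable) (hcond : ∀ S ∈ s, IsCond P X S) :
    IsCond P X (cSup P X s) ∧
      ∀ x ∈ X, indBase P (cSup P X s) x =ᵐ[P] ⋃ S ∈ s, indBase P S x := by
  refine cSup_spec_of_upperBounds hX
    (.biUnion hs fun S hS => isLocal_indBase (hcond S hS).1 X)
    (fun x _ => .biUnion hs fun S hS => measurableSet_indBase (hcond S hS).1 x) fun T hT => ?_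
  simp only [ae_le_set, iUnion_sdiff, measure_biUnion_null_iff hs]
  simp only [← ae_le_set]
  exact ⟨fun h x hx S hS => (cle_iff_indBase_le (hcond S hS) hT.1).1 (h S hS) x hx,
    fun h S hS => (cle_iff_indBase_le (hcond S hS) hT.1).2 fun x hx => h x hx S hS⟩

lemma cInf_spec (hX : Stable P X) (hs : s.Countable) (hcond : ∀ S ∈ s, IsCond P X S) :
    IsCond P X (cInf P X s) ∧
      ∀ x ∈ X, indBase P (cInf P X s) x =ᵐ[P] ⋂ S ∈ s, indBase P S x := by
  refine cInf_spec_of_lowerBounds hX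
    (.biInter hs fun S hS => isLocal_indBase (hcond S hS).1 X)
    (fun x _ => .biInter hs fun S hS => measurableSet_indBase (hcond S hS).1 x) fun T hT => ?_
  simp only [ae_le_set, sdiff_iInter, measure_biUnion_null_iff hs]
  simp only [← ae_le_set]
  exact ⟨fun h x hx S hS => (cle_iff_indBase_le hT (hcond S hS).1).1 (h S hS) x hx,
    fun h S hS => (cle_iff_indBase_le hT (hcond S hS).1).2 fun x hx => h x hx S hS⟩

lemma isCond_cInf₂ (hX : Stable P X) (hS : IsCond P X S) (hT : IsCond P X T) :
    IsCond P X (cInf₂ P X S T) :=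
  (cInf_spec hX (to_countable {S, T}) (by simp [hS, hT])).1

lemma indBase_cInf₂ (hX : Stable P X) (hS : IsCond P X S) (hT : IsCond P X T) {x : Ω → E}
    (hx : x ∈ X) :
    indBase P (cInf₂ P X S T) x =ᵐ[P] (indBase P S x ∩ indBase P T x : Set Ω) := by
  simpa [cInf₂] using (cInf_spec hX (to_countable {S, T}) (by simp [hS, hT])).2 x hx

lemma isCond_cSup₂ (hX : Stable P X) (hS : IsCond P X S) (hT : IsCond P X T) :
    IsCond P X (cSup₂ P X S T) :=
  (cSup_spec hX (to_countable {S, T}) (by simp [hS, hT])).1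

lemma indBase_cSup₂ (hX : Stable P X) (hS : IsCond P X S) (hT : IsCond P X T) {x : Ω → E}
    (hx : x ∈ X) :
    indBase P (cSup₂ P X S T) x =ᵐ[P] (indBase P S x ∪ indBase P T x : Set Ω) := by
  simpa [cSup₂] using (cSup_spec hX (to_countable {S, T}) (by simp [hS, hT])).2 x hx

lemma isCond_cSupFam {ι : Sort*} [Countable ι] (hX : Stable P X) {S : ι → CondRaw Ω E}
    (hS : ∀ k, IsCond P X (S k)) : IsCond P X (cSupFam P X S) :=
  (cSup_spec hX (countable_range S) (forall_mem_range.2 hS)).1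

lemma indBase_cSupFam {ι : Sort*} [Countable ι] (hX : Stable P X) {S : ι → CondRaw Ω E}
    (hS : ∀ k, IsCond P X (S k)) {x : Ω → E} (hx : x ∈ X) :
    indBase P (cSupFam P X S) x =ᵐ[P] ⋃ k, indBase P (S k) x := by
  simpa [cSupFam] using (cSup_spec hX (countable_range S) (forall_mem_range.2 hS)).2 x hx

lemma indBase_cbot (hX : Stable P X) (x : Ω → E) : indBase P (cbot X) x =ᵐ[P] (∅ : Set Ω) := by
  obtain ⟨y, -, hxy⟩ := exists_indBase_le_agreeSet (S := cbot X) hX x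
  exact EventuallyLE.antisymm (hxy.mono fun _ h hω => (h hω).1) (.of_forall fun _ => False.elim)

lemma cdisjoint_iff_aedisjoint (hX : Stable P X) (hS : IsCond P X S) (hT : IsCond P X T) :
    cdisjoint P X S T ↔ ∀ x ∈ X, AEDisjoint P (indBase P S x) (indBase P T x) := by
  rw [cdisjoint, ceq_iff_indBase_ae_eq (isCond_cInf₂ hX hS hT) ⟨hX, Subset.rfl, .empty⟩]
  exact forall₂_congr fun x hx => (indBase_cbot hX x).congr_right.trans <|
    (indBase_cInf₂ hX hS hT hx).congr_left.trans ae_eq_empty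

lemma ccompl_spec (hX : Stable P X) (hS : IsCond P X S) :
    IsCond P X (ccompl P X S) ∧ ∀ x ∈ X, indBase P (ccompl P X S) x =ᵐ[P] (indBase P S x)ᶜ := by
  have hlocal := (isLocal_indBase hS.1 X).compl
  have hmeas : ∀ x ∈ X, MeasurableSet (indBase P S x)ᶜ := fun x _ =>
    (measurableSet_indBase hS.1 x).compl
  refine cSup_spec_of_upperBounds hX hlocal hmeas fun T hT => ⟨fun h => ?_, ?_⟩
  · obtain ⟨R, hR, hRS⟩ := exists_isCond_indBase_ae_eq hX hlocal hmeas
    have hdisj : cdisjoint P X R S := (cdisjoint_iff_aedisjoint hX hR hS).2 fun x hx =>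
      aedisjoint_compl_left.congr (hRS x hx) .rfl
    exact fun x hx =>
      (hRS x hx).symm.le.trans ((cle_iff_indBase_le hR hT.1).1 (h R ⟨hR, hdisj⟩) x hx)
  · rintro h R ⟨hR, hdisj⟩
    refine (cle_iff_indBase_le hR hT.1).2 fun x hx => EventuallyLE.trans ?_ (h x hx)
    have hnull := (cdisjoint_iff_aedisjoint hX hR hS).1 hdisj x hx
    filter_upwards [measure_eq_zero_iff_ae_notMem.1 hnull] with ω h hR hS using h ⟨hR, hS⟩

lemma isCond_ccompl (hX : Stable P X) (hS : IsCond P X S) : IsCond P X (ccompl P X S) :=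
  (ccompl_spec hX hS).1

lemma indBase_ccompl (hX : Stable P X) (hS : IsCond P X S) {x : Ω → E} (hx : x ∈ X) :
    indBase P (ccompl P X S) x =ᵐ[P] (indBase P S x)ᶜ :=
  (ccompl_spec hX hS).2 x hx

lemma ccompl_cSup₂_ccompl_ceq (hX : Stable P X) (hS : IsCond P X S) (hT : IsCond P X T) :
    ceq P (ccompl P X (cSup₂ P X (ccompl P X S) (ccompl P X T))) (cInf₂ P X S T) := by
  have hS' := isCond_ccompl hX hS
  have hT' := isCond_ccompl hX hT
  have hsup := isCond_cSup₂ hX hS' hT'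
  rw [ceq_iff_indBase_ae_eq (isCond_ccompl hX hsup) (isCond_cInf₂ hX hS hT)]
  intro x hx
  have hunion : indBase P (cSup₂ P X (ccompl P X S) (ccompl P X T)) x =ᵐ[P]
      ((indBase P S x)ᶜ ∪ (indBase P T x)ᶜ : Set Ω) :=
    (indBase_cSup₂ hX hS' hT' hx).trans ((indBase_ccompl hX hS hx).union (indBase_ccompl hX hT hx))
  refine (indBase_ccompl hX hsup hx).trans (hunion.compl.trans ?_)
  simpa only [compl_union, compl_compl] using (indBase_cInf₂ hX hS hT hx).symm

end Operations

section Collections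

variable {Ω E : Type*} {mΩ : MeasurableSpace Ω} {P : @Measure Ω mΩ}
  {X : Set (Ω → E)} {𝒳 𝒟 : Set (CondRaw Ω E)}

lemma IsStableSigma.cSup₂_mem (h𝒳 : IsStableSigma P X 𝒳) {S T : CondRaw Ω E} (hS : S ∈ 𝒳)
    (hT : T ∈ 𝒳) : cSup₂ P X S T ∈ 𝒳 := by
  obtain ⟨U, hU⟩ := (to_countable {S, T}).exists_eq_range (insert_nonempty S {T})
  have hpair : ({S, T} : Set (CondRaw Ω E)) ⊆ 𝒳 := insert_subset hS (singleton_subset_iff.2 hT)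
  rw [cSup₂, hU]
  exact h𝒳.2.2.2 U fun k => hpair (hU ▸ mem_range_self k)

variable [SFinite P]

lemma IsStableSigma.cInf₂_mem (hX : Stable P X) (h𝒳 : IsStableSigma P X 𝒳) {S T : CondRaw Ω E}
    (hS : S ∈ 𝒳) (hT : T ∈ 𝒳) : cInf₂ P X S T ∈ 𝒳 := by
  obtain ⟨⟨-, hcond, hceq, -⟩, -, hcompl, -⟩ := id h𝒳
  exact hceq _ (hcompl _ (h𝒳.cSup₂_mem (hcompl S hS) (hcompl T hT))) _
    (isCond_cInf₂ hX (hcond S hS) (hcond T hT))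
    (ccompl_cSup₂_ccompl_ceq hX (hcond S hS) (hcond T hT))

lemma exists_mem_indBase_ae_eq_disjointed (hX : Stable P X) (hcond : ∀ S ∈ 𝒟, IsCond P X S)
    (hcompl : ∀ S ∈ 𝒟, ccompl P X S ∈ 𝒟) (hinter : ∀ S ∈ 𝒟, ∀ T ∈ 𝒟, cInf₂ P X S T ∈ 𝒟)
    {S : ℕ → CondRaw Ω E} (hS : ∀ k, S k ∈ 𝒟) (n : ℕ) :
    ∃ R ∈ 𝒟, ∀ x ∈ X, indBase P R x =ᵐ[P] disjointed (fun k => indBase P (S k)) n x := by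
  refine disjointedRec
    (p := fun φ : (Ω → E) → Set Ω => ∃ R ∈ 𝒟, ∀ x ∈ X, indBase P R x =ᵐ[P] φ x)
    ?_ ⟨S n, hS n, fun x _ => .rfl⟩
  rintro φ k ⟨R, hR, hRφ⟩
  refine ⟨_, hinter R hR _ (hcompl _ (hS k)), fun x hx =>
    (indBase_cInf₂ hX (hcond R hR) (hcond _ (hcompl _ (hS k))) hx).trans
      ((hRφ x hx).inter (indBase_ccompl hX (hcond _ (hS k)) hx))⟩

lemma IsStableDynkin.cSupFam_mem (hX : Stable P X) (h𝒟 : IsStableDynkin P X 𝒟)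
    (hinter : ∀ S ∈ 𝒟, ∀ T ∈ 𝒟, cInf₂ P X S T ∈ 𝒟) {S : ℕ → CondRaw Ω E} (hS : ∀ k, S k ∈ 𝒟) :
    cSupFam P X S ∈ 𝒟 := by
  obtain ⟨⟨-, hcond, hceq, -⟩, -, hcompl, hsup⟩ := h𝒟
  choose R hR hRS using exists_mem_indBase_ae_eq_disjointed hX hcond hcompl hinter hS
  have hdisj : ∀ i j, i ≠ j → cdisjoint P X (R i) (R j) := fun i j hij =>
    (cdisjoint_iff_aedisjoint hX (hcond _ (hR i)) (hcond _ (hR j))).2 fun x hx =>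
      (Pi.disjoint_iff.1 (disjoint_disjointed _ hij) x).aedisjoint.congr (hRS i x hx) (hRS j x hx)
  have hcondR := isCond_cSupFam hX fun k => hcond _ (hR k)
  have hcondS := isCond_cSupFam hX fun k => hcond _ (hS k)
  refine hceq _ (hsup R hR hdisj) _ hcondS ((ceq_iff_indBase_ae_eq hcondR hcondS).2 fun x hx => ?_)
  have hR_union := (indBase_cSupFam hX (fun k => hcond _ (hR k)) hx).trans
    (Filter.EventuallyEq.countable_iUnion fun n => hRS n x hx)
  have hS_union := indBase_cSupFam hX (fun k => hcond _ (hS k)) hx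
  have hunion : ⋃ n, disjointed (fun k => indBase P (S k)) n x = ⋃ n, indBase P (S n) x := by
    simpa only [iSup_apply, iSup_eq_iUnion] using
      congrFun (iSup_disjointed fun k => indBase P (S k)) x
  exact (hunion ▸ hR_union).trans hS_union.symm

theorem stableDynkin_isSigma_iff_closed_under_inter_general (hX : Stable P X)
    (h𝒟 : IsStableDynkin P X 𝒟) :
    IsStableSigma P X 𝒟 ↔ ∀ S ∈ 𝒟, ∀ T ∈ 𝒟, cInf₂ P X S T ∈ 𝒟 :=
  ⟨fun hσ _ hS _ hT => hσ.cInf₂_mem hX hS hT,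
    fun hinter => ⟨h𝒟.1, h𝒟.2.1, h𝒟.2.2.1, fun _ hS => h𝒟.cSupFam_mem hX hinter hS⟩⟩

end Collections

/-- **Proposition 3.4.**  A stable Dynkin system on a stable set `X` is a stable
σ-algebra if and only if it is closed under finite conditional intersections. -/
theorem stableDynkin_isSigma_iff_closed_under_inter
    {Ω E : Type*} {mΩ : MeasurableSpace Ω} (P : @Measure Ω mΩ)
    [IsProbabilityMeasure P] (X : Set (Ω → E)) (hX : Stable P X)
    (𝒟 : Set (CondRaw Ω E)) (h𝒟 : IsStableDynkin P X 𝒟) :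
    IsStableSigma P X 𝒟 ↔ ∀ S ∈ 𝒟, ∀ T ∈ 𝒟, cInf₂ P X S T ∈ 𝒟 :=
  stableDynkin_isSigma_iff_closed_under_inter_general hX h𝒟

end CondMT
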